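/- Let q be odd, 4 ≤ 2k ≤ m and 4 ≤ 2t ≤ m-2. Then W_2(2t,m) < W_{2k}(2t,m), where W_{2j}(2t,m) = #{A skew-symmetric m×m over F_q of rank ≤ 2t : tr(E_{2j}A) ≠ 0}. Consequently, the number of minimum weight codewords in C_A(2t,m) equals (q^m - 1)(q^{m-1} - 1)/(q² - 1). -/

import Mathlib

open Matrix
def IsSkewSym {K : Type} [Field K] {m : ℕ} (A : Matrix (Fin m) (Fin m) K) : Prop :=
  Aᵀ = -A ∧ ∀ i, A i i = 0

def Estd (K : Type) [Field K] (k m : ℕ) : Matrix (Fin m) (Fin m) K :=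
  Matrix.of fun i j =>
    if j.val = i.val + 1 ∧ i.val % 2 = 0 ∧ j.val < 2*k then 1
    else if i.val = j.val + 1 ∧ j.val % 2 = 0 ∧ i.val < 2*k then -1 else 0

noncomputable def na (K : Type) [Field K] (r m : ℕ) : ℕ :=
  Nat.card {A : Matrix (Fin m) (Fin m) K // IsSkewSym A ∧ A.rank = r}

noncomputable def Na (K : Type) [Field K] (r m : ℕ) : ℕ :=
  Nat.card {A : Matrix (Fin m) (Fin m) K // IsSkewSym A ∧ A.rank ≤ r}

noncomputable def wSmall (K : Type) [Field K] (k r m : ℕ) : ℕ :=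
  Nat.card {A : Matrix (Fin m) (Fin m) K //
    IsSkewSym A ∧ A.rank = 2*r ∧ Matrix.trace (Estd K k m * A) ≠ 0}

noncomputable def Wcap (K : Type) [Field K] (k t m : ℕ) : ℕ :=
  Nat.card {A : Matrix (Fin m) (Fin m) K //
    IsSkewSym A ∧ A.rank ≤ 2*t ∧ Matrix.trace (Estd K k m * A) ≠ 0}

noncomputable def projWt (K : Type) [Field K] (m t : ℕ)
    (φ : Matrix (Fin m) (Fin m) K →ₗ[K] K) : ℕ :=
  Nat.card {x : Projectivization K (Matrix (Fin m) (Fin m) K) //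
    ∃ (A : Matrix (Fin m) (Fin m) K) (h : A ≠ 0),
      x = Projectivization.mk K A h ∧ IsSkewSym A ∧ A.rank ≤ 2*t ∧ φ A ≠ 0}

noncomputable def affWt (K : Type) [Field K] (m t : ℕ)
    (F : Matrix (Fin m) (Fin m) K) : ℕ :=
  Nat.card {A : Matrix (Fin m) (Fin m) K //
    IsSkewSym A ∧ A.rank ≤ 2*t ∧ Matrix.trace (F * A) ≠ 0}


/-- The skew-symmetric matrix `u vᵀ - v uᵀ` attached to two vectors. -/
def wedgeMatrix {K : Type} [Field K] {m : ℕ} (u v : Fin m → K) : Matrix (Fin m) (Fin m) K :=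
  Matrix.of fun i j => u i * v j - v i * u j

theorem wedgeMatrix_apply {K : Type} [Field K] {m : ℕ} (u v : Fin m → K) (i j : Fin m) :
    wedgeMatrix u v i j = u i * v j - v i * u j := rfl

theorem IsSkewSym.apply_swap {K : Type} [Field K] {m : ℕ} {A : Matrix (Fin m) (Fin m) K}
    (hA : IsSkewSym A) (i j : Fin m) : A j i = -A i j := by
  have := congrFun (congrFun hA.1 i) j
  simpa using this

theorem isSkewSym_of_apply {K : Type} [Field K] {m : ℕ} {A : Matrix (Fin m) (Fin m) K}
    (h : ∀ i j, A j i = -A i j) (h0 : ∀ i, A i i = 0) : IsSkewSym A :=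
  ⟨by ext i j; simpa using h i j, h0⟩

theorem isSkewSym_wedgeMatrix {K : Type} [Field K] {m : ℕ} (u v : Fin m → K) :
    IsSkewSym (wedgeMatrix u v) :=
  isSkewSym_of_apply (fun i j => by simp only [wedgeMatrix_apply]; ring)
    (fun i => by simp only [wedgeMatrix_apply]; ring)

theorem IsSkewSym.add {K : Type} [Field K] {m : ℕ} {A B : Matrix (Fin m) (Fin m) K}
    (hA : IsSkewSym A) (hB : IsSkewSym B) : IsSkewSym (A + B) :=
  isSkewSym_of_apply
    (fun i j => by simp only [Matrix.add_apply, hA.apply_swap i j, hB.apply_swap i j]; ring)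
    (fun i => by simp [hA.2 i, hB.2 i])

theorem sum_three_single_mul {K : Type} [Field K] {m : ℕ} (a b c : Fin m) (x y z : K)
    (f : Fin m → K) :
    ∑ l, ((if l = a then x else 0) + (if l = b then y else 0) + (if l = c then z else 0)) * f l =
      x * f a + y * f b + z * f c := by
  simp [add_mul, Finset.sum_add_distrib, ite_mul]

theorem IsSkewSym.congr {K : Type} [Field K] {m : ℕ} {A : Matrix (Fin m) (Fin m) K}
    (hchar : ringChar K ≠ 2) (hA : IsSkewSym A) (P : Matrix (Fin m) (Fin m) K) :
    IsSkewSym (P * A * Pᵀ) := by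
  have h1 : (P * A * Pᵀ)ᵀ = -(P * A * Pᵀ) := by
    simp [Matrix.transpose_mul, hA.1, Matrix.mul_assoc]
  refine ⟨h1, fun i => ?_⟩
  have h2 := congrFun (congrFun h1 i) i
  have h3 : (2 : K) ≠ 0 := Ring.two_ne_zero hchar
  simp only [Matrix.transpose_apply, Matrix.neg_apply] at h2
  have : (2 : K) * (P * A * Pᵀ) i i = 0 := by linear_combination h2
  simpa [h3] using this

theorem rank_congr_le {K : Type} [Field K] {m : ℕ} (P A Q : Matrix (Fin m) (Fin m) K) :
    (P * A * Q).rank ≤ A.rank :=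
  (Matrix.rank_mul_le_left _ _).trans (Matrix.rank_mul_le_right _ _)

/-- The weight of a codeword is a congruence invariant. -/
theorem affWt_congr {K : Type} [Field K] {m : ℕ} (hchar : ringChar K ≠ 2) (t : ℕ)
    (F P : Matrix (Fin m) (Fin m) K) (hP : IsUnit P.det) :
    affWt K m t (P * F * Pᵀ) = affWt K m t F := by
  have hQ := Matrix.mul_nonsing_inv P hP
  have hQ' := Matrix.nonsing_inv_mul P hP
  have hT : Pᵀ * P⁻¹ᵀ = 1 := by rw [← Matrix.transpose_mul, hQ', Matrix.transpose_one]
  have hT' : P⁻¹ᵀ * Pᵀ = 1 := by rw [← Matrix.transpose_mul, hQ, Matrix.transpose_one]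
  have key : ∀ A, Matrix.trace (F * (Pᵀ * A * P)) = Matrix.trace (P * F * Pᵀ * A) := by
    intro A
    rw [← Matrix.mul_assoc, ← Matrix.mul_assoc, Matrix.trace_mul_comm]
    simp only [Matrix.mul_assoc]
  have hback : ∀ A, Pᵀ * (P⁻¹ᵀ * A * P⁻¹) * P = A := by
    intro A
    calc Pᵀ * (P⁻¹ᵀ * A * P⁻¹) * P = (Pᵀ * P⁻¹ᵀ) * A * (P⁻¹ * P) := by
          simp only [Matrix.mul_assoc]
      _ = A := by rw [hT, hQ', Matrix.one_mul, Matrix.mul_one]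
  have hforth : ∀ A, P⁻¹ᵀ * (Pᵀ * A * P) * P⁻¹ = A := by
    intro A
    calc P⁻¹ᵀ * (Pᵀ * A * P) * P⁻¹ = (P⁻¹ᵀ * Pᵀ) * A * (P * P⁻¹) := by
          simp only [Matrix.mul_assoc]
      _ = A := by rw [hT', hQ, Matrix.one_mul, Matrix.mul_one]
  refine Nat.card_congr
    { toFun := fun A => ⟨Pᵀ * A.1 * P, ?_, ?_, ?_⟩
      invFun := fun A => ⟨P⁻¹ᵀ * A.1 * P⁻¹, ?_, ?_, ?_⟩
      left_inv := fun A => Subtype.ext (hforth A.1)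
      right_inv := fun A => Subtype.ext (hback A.1) }
  · simpa using A.2.1.congr hchar Pᵀ
  · exact (rank_congr_le _ _ _).trans A.2.2.1
  · rw [key]; exact A.2.2.2
  · simpa using A.2.1.congr hchar P⁻¹ᵀ
  · exact (rank_congr_le _ _ _).trans A.2.2.1
  · rw [← key, hback]; exact A.2.2.2

theorem mul_wedgeMatrix_mul_transpose {K : Type} [Field K] {m : ℕ}
    (P : Matrix (Fin m) (Fin m) K) (u v : Fin m → K) :
    P * wedgeMatrix u v * Pᵀ = wedgeMatrix (P *ᵥ u) (P *ᵥ v) := by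
  have h : ∀ u v : Fin m → K, wedgeMatrix u v = Matrix.vecMulVec u v - Matrix.vecMulVec v u :=
    fun u v => rfl
  rw [h, h, Matrix.mul_sub, Matrix.sub_mul, Matrix.mul_vecMulVec, Matrix.mul_vecMulVec,
    Matrix.vecMulVec_mul, Matrix.vecMulVec_mul, Matrix.vecMul_transpose, Matrix.vecMul_transpose]

/-- A skew-symmetric matrix splitting as a hyperbolic plane on the indices `a, b` and a
skew-symmetric matrix on the other indices. -/
def SplitsAt {K : Type} [Field K] {m : ℕ} (G : Matrix (Fin m) (Fin m) K) (a b : Fin m) : Prop :=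
  IsSkewSym G ∧ G a b = 1 ∧ ∀ j, j ≠ a → j ≠ b → G a j = 0 ∧ G b j = 0

theorem exists_congr_submatrix {K : Type} [Field K] {m : ℕ} (F : Matrix (Fin m) (Fin m) K)
    (σ : Equiv.Perm (Fin m)) :
    ∃ P : Matrix (Fin m) (Fin m) K, IsUnit P.det ∧ F.submatrix σ σ = P * F * Pᵀ := by
  refine ⟨(1 : Matrix (Fin m) (Fin m) K).submatrix σ id, ?_, ?_⟩
  · rw [Matrix.det_permute, Matrix.det_one, mul_one]
    exact (Units.isUnit _).map (Int.castRingHom K)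
  · ext i j
    simp [Matrix.mul_apply, Matrix.one_apply]

theorem exists_perm_two {m : ℕ} {a b i j : Fin m} (hab : a ≠ b) (hij : i ≠ j) :
    ∃ σ : Equiv.Perm (Fin m), σ a = i ∧ σ b = j ∧
      ∀ k, k ≠ a → k ≠ b → k ≠ i → k ≠ j → σ k = k := by
  refine ⟨Equiv.swap a i * Equiv.swap b (Equiv.swap a i j), ?_, ?_, ?_⟩ <;>
    simp only [Equiv.Perm.mul_apply, Equiv.swap_apply_def] <;> grind

theorem exists_congr_splitsAt {K : Type} [Field K] {m : ℕ} (hchar : ringChar K ≠ 2)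
    {F : Matrix (Fin m) (Fin m) K} (hF : IsSkewSym F) (hF0 : F ≠ 0) {a b : Fin m} (hab : a ≠ b) :
    ∃ P : Matrix (Fin m) (Fin m) K, IsUnit P.det ∧ SplitsAt (P * F * Pᵀ) a b := by
  obtain ⟨i, j, hij⟩ : ∃ i j, F i j ≠ 0 := by
    by_contra! h
    exact hF0 (by ext i j; exact h i j)
  have hne : i ≠ j := by rintro rfl; exact hij (hF.2 i)
  obtain ⟨σ, hσa, hσb, -⟩ := exists_perm_two hab hne
  obtain ⟨P₁, hP₁, hF₁⟩ := exists_congr_submatrix F σ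
  have hS : IsSkewSym (F.submatrix σ σ) := hF₁ ▸ hF.congr hchar P₁
  set A := F.submatrix σ σ with hA
  have hf : A a b ≠ 0 := by simpa [hA, hσa, hσb] using hij
  set f := A a b with hfdef
  let x : Fin m → K := fun i => if i = a then 1 else if i = b then 0 else -A i b / f
  let y : Fin m → K := fun i => if i = a then 0 else if i = b then f⁻¹ else A i a / f
  let y' : Fin m → K := fun i => if i = a then 0 else if i = b then f else -A i a
  let z : Fin m → K := fun i => if i = a then 0 else if i = b then 0 else 1
  let x' : Fin m → K := fun i => if i = a then 1 else if i = b then 0 else A i b / f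
  let P₂ : Matrix (Fin m) (Fin m) K := Matrix.of fun i l =>
    (if l = a then x i else 0) + (if l = b then y i else 0) + (if l = i then z i else 0)
  let Q₂ : Matrix (Fin m) (Fin m) K := Matrix.of fun i l =>
    (if l = a then x' i else 0) + (if l = b then y' i else 0) + (if l = i then z i else 0)
  have hPm : ∀ (M : Matrix (Fin m) (Fin m) K) i k,
      (P₂ * M) i k = x i * M a k + y i * M b k + z i * M i k := by
    intro M i k
    rw [Matrix.mul_apply]
    exact sum_three_single_mul a b i (x i) (y i) (z i) (fun l => M l k)
  have hQm : ∀ (M : Matrix (Fin m) (Fin m) K) i k,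
      (Q₂ * M) i k = x' i * M a k + y' i * M b k + z i * M i k := by
    intro M i k
    rw [Matrix.mul_apply]
    exact sum_three_single_mul a b i (x' i) (y' i) (z i) (fun l => M l k)
  have hQP : Q₂ * P₂ = 1 := by
    ext i k
    rw [hQm]
    simp only [P₂, Matrix.of_apply, Matrix.one_apply, x, y, z, x', y']
    by_cases hia : i = a <;> by_cases hib : i = b <;> by_cases hka : k = a <;>
      by_cases hkb : k = b <;> by_cases hik : k = i <;> grind
  have hP₂ : IsUnit P₂.det := by
    have := congrArg Matrix.det hQP
    rw [Matrix.det_mul, Matrix.det_one] at this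
    exact IsUnit.of_mul_eq_one_right _ this
  have hval : ∀ i k, (P₂ * A * P₂ᵀ) i k =
      x k * (x i * A a a + y i * A b a + z i * A i a) +
      y k * (x i * A a b + y i * A b b + z i * A i b) +
      z k * (x i * A a k + y i * A b k + z i * A i k) := by
    intro i k
    have : (P₂ * A * P₂ᵀ) i k = (P₂ * (P₂ * A)ᵀ) k i := by
      rw [← Matrix.transpose_apply (P₂ * A * P₂ᵀ), Matrix.transpose_mul,
        Matrix.transpose_transpose]
    rw [this, hPm]
    simp only [Matrix.transpose_apply, hPm]
  refine ⟨P₂ * P₁, by rw [Matrix.det_mul]; exact hP₂.mul hP₁, hF.congr hchar _, ?_⟩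
  have hPP : P₂ * P₁ * F * (P₂ * P₁)ᵀ = P₂ * A * P₂ᵀ := by
    rw [hF₁, Matrix.transpose_mul]
    simp only [Matrix.mul_assoc]
  rw [hPP]
  have h1 := hS.2 a
  have h2 := hS.2 b
  have h3 := hS.apply_swap a b
  refine ⟨?_, fun j hja hjb => ⟨?_, ?_⟩⟩
  · rw [hval]
    simp [x, y, z, hab.symm, ← hfdef, hf]
  · have h4 := hS.apply_swap a j
    rw [hval]
    simp [x, y, z, hja, hjb, ← hfdef, h1]
    rw [h4]
    field_simp
    ring
  · have h4 := hS.apply_swap b j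
    rw [hval]
    simp [x, y, z, hja, hjb, hab.symm, h2, h3, ← hfdef]
    rw [h4]
    field_simp
    ring

/-- A correction of row and column `a` of a skew-symmetric matrix that does not raise the rank,
shifts the entry at `a, b` by `c`, and depends only on the other rows and columns. -/
theorem exists_rank_add_wedgeMatrix_le {K : Type} [Field K] {m : ℕ} {a b : Fin m} (hab : a ≠ b)
    (R : Matrix (Fin m) (Fin m) K) (c : K) :
    ∃ u : Fin m → K, u b = c ∧ ((∀ j, j ≠ a → R j b = 0) → u = Pi.single b c) ∧
      ∀ A : Matrix (Fin m) (Fin m) K, IsSkewSym A →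
        (∀ i j, i ≠ a → j ≠ a → A i j = R i j) → A a b ≠ 0 →
        (A + wedgeMatrix (Pi.single a 1) u).rank ≤ A.rank := by
  by_cases h : ∀ j, j ≠ a → R j b = 0
  · refine ⟨Pi.single b c, by simp, fun _ => rfl, fun A hA hAR hAab => ?_⟩
    let d : Fin m → K := fun i => if i = b then (A a b + c) / A a b else 1
    have hd : A + wedgeMatrix (Pi.single a 1) (Pi.single b c) =
        Matrix.diagonal d * A * Matrix.diagonal d := by
      ext i j
      have hswap := hA.apply_swap a b
      have hbb := hA.2 b
      have hcol : ∀ k, k ≠ a → A k b = 0 := fun k hk => by rw [hAR k b hk hab.symm, h k hk]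
      have hrow : ∀ k, k ≠ a → A b k = 0 := fun k hk => by
        rw [hA.apply_swap k b, hcol k hk, neg_zero]
      simp only [Matrix.add_apply, wedgeMatrix_apply, Matrix.mul_diagonal, Matrix.diagonal_mul,
        d, Pi.single_apply]
      by_cases hia : i = a <;> by_cases hib : i = b <;> by_cases hja : j = a <;>
        by_cases hjb : j = b <;> grind
    rw [hd]
    exact rank_congr_le _ _ _
  · push Not at h
    obtain ⟨l, hla, hl⟩ := h
    refine ⟨fun i => c / R l b * R l i, by field_simp, fun h' => absurd (h' l hla) hl,
      fun A hA hAR hAab => ?_⟩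
    have hmul : ∀ (s : K) (M : Matrix (Fin m) (Fin m) K) i k,
        (Matrix.transvection a l s * M) i k = M i k + if i = a then s * M l k else 0 := by
      intro s M i k
      by_cases hi : i = a <;> simp [Matrix.transvection, add_mul, hi]
    have hT : A + wedgeMatrix (Pi.single a 1) (fun i => c / R l b * R l i) =
        Matrix.transvection a l (c / R l b) * A * (Matrix.transvection a l (c / R l b))ᵀ := by
      ext i j
      have hij : ∀ (P : Matrix (Fin m) (Fin m) K), (P * A * Pᵀ) i j = (P * (P * A)ᵀ) j i := by
        intro P
        rw [← Matrix.transpose_apply (P * A * Pᵀ), Matrix.transpose_mul,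
          Matrix.transpose_transpose]
      have h1 := hA.2 l
      have h2 := hA.apply_swap a l
      have h3 := hA.apply_swap i l
      have h4 : ∀ k, k ≠ a → R l k = A l k := fun k hk => (hAR l k hla hk).symm
      rw [hij, hmul]
      simp only [Matrix.transpose_apply, hmul, Matrix.add_apply, wedgeMatrix_apply,
        Pi.single_apply]
      generalize c / R l b = s
      by_cases hia : i = a <;> by_cases hja : j = a <;> grind
    rw [hT]
    exact rank_congr_le _ _ _

theorem trace_wedgeMatrix_single_mul {K : Type} [Field K] {m : ℕ} (a b : Fin m)
    {A : Matrix (Fin m) (Fin m) K} (hA : IsSkewSym A) :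
    Matrix.trace (wedgeMatrix (Pi.single a 1) (Pi.single b 1) * A) = -2 * A a b := by
  simp only [Matrix.trace, Matrix.diag, Matrix.mul_apply, wedgeMatrix_apply, sub_mul,
    Finset.sum_sub_distrib, Pi.single_apply]
  simp only [ite_mul, mul_ite, mul_one, mul_zero, one_mul, zero_mul,
    Finset.sum_ite_eq', Finset.mem_univ, if_true]
  rw [hA.apply_swap a b]
  ring

/-- Block-diagonal skew-symmetric matrix with blocks weighted by `d` on the first `s` indices. -/
def pairingMatrix {K : Type} [Field K] (m s : ℕ) (d : ℕ → K) : Matrix (Fin m) (Fin m) K :=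
  Matrix.of fun i j =>
    if j.val = i.val + 1 ∧ i.val % 2 = 0 ∧ j.val < 2 * s then d i.val
    else if i.val = j.val + 1 ∧ j.val % 2 = 0 ∧ i.val < 2 * s then -d j.val else 0

theorem isSkewSym_pairingMatrix {K : Type} [Field K] (m s : ℕ) (d : ℕ → K) :
    IsSkewSym (pairingMatrix m s d) := by
  refine isSkewSym_of_apply (fun i j => ?_) (fun i => ?_) <;>
    simp only [pairingMatrix, Matrix.of_apply] <;> grind

theorem card_fin_Ico {m r s : ℕ} (hs : s ≤ m) :
    Fintype.card {i : Fin m // r ≤ i.val ∧ i.val < s} = s - r := by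
  rw [← Nat.card_Ico, ← Fintype.card_coe]
  refine Fintype.card_congr
    { toFun := fun i => ⟨i.1.val, Finset.mem_Ico.mpr i.2⟩
      invFun := fun i => ⟨⟨i.1, (Finset.mem_Ico.mp i.2).2.trans_le hs⟩, Finset.mem_Ico.mp i.2⟩
      left_inv := fun _ => rfl
      right_inv := fun _ => rfl }

theorem rank_pairingMatrix_ge {K : Type} [Field K] {m s : ℕ} (hs : 2 * s ≤ m) {d : ℕ → K}
    (hd : ∀ i, d i ≠ 0) : 2 * s ≤ (pairingMatrix m s d).rank := by
  classical
  have h : pairingMatrix m s d * pairingMatrix m s (fun i => (d i)⁻¹) =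
      Matrix.diagonal (fun i : Fin m => if 0 ≤ i.val ∧ i.val < 2 * s then (-1 : K) else 0) := by
    ext i j
    rw [Matrix.mul_apply, Matrix.diagonal_apply]
    by_cases hi : i.val < 2 * s
    · by_cases hpar : i.val % 2 = 0
      · rw [Finset.sum_eq_single (⟨i.val + 1, by omega⟩ : Fin m)]
        · have := hd i.val
          simp only [pairingMatrix, Matrix.of_apply, Fin.ext_iff]
          grind
        · intro l _ hl
          rw [Ne, Fin.ext_iff] at hl
          simp only [pairingMatrix, Matrix.of_apply]
          grind
        · simp
      · rw [Finset.sum_eq_single (⟨i.val - 1, by omega⟩ : Fin m)]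
        · have := hd (i.val - 1)
          simp only [pairingMatrix, Matrix.of_apply, Fin.ext_iff]
          grind
        · intro l _ hl
          rw [Ne, Fin.ext_iff] at hl
          simp only [pairingMatrix, Matrix.of_apply]
          grind
        · simp
    · rw [Finset.sum_eq_zero]
      · simp [hi]
      · intro l _
        simp only [pairingMatrix, Matrix.of_apply]
        grind
  calc 2 * s = Fintype.card {i : Fin m // 0 ≤ i.val ∧ i.val < 2 * s} := by
        rw [card_fin_Ico hs, Nat.sub_zero]
    _ = (Matrix.diagonal
          (fun i : Fin m => if 0 ≤ i.val ∧ i.val < 2 * s then (-1 : K) else 0)).rank := by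
        rw [Matrix.rank_diagonal]
        exact Fintype.card_congr (Equiv.subtypeEquivRight fun i => by simp)
    _ ≤ _ := by rw [← h]; exact Matrix.rank_mul_le_left _ _

theorem rank_pairingMatrix_le {K : Type} [Field K] {m s : ℕ} (hs : 2 * s ≤ m) {d : ℕ → K}
    (hd : d 0 = 0) : (pairingMatrix m s d).rank ≤ 2 * s - 2 := by
  classical
  have h : pairingMatrix m s d = pairingMatrix m s d *
      Matrix.diagonal (fun i : Fin m => if 2 ≤ i.val ∧ i.val < 2 * s then (1 : K) else 0) := by
    ext i j
    simp only [pairingMatrix, Matrix.mul_diagonal, Matrix.of_apply]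
    grind
  calc (pairingMatrix m s d).rank ≤ (Matrix.diagonal
          (fun i : Fin m => if 2 ≤ i.val ∧ i.val < 2 * s then (1 : K) else 0)).rank := by
        rw [h]; exact Matrix.rank_mul_le_right _ _
    _ = Fintype.card {i : Fin m // 2 ≤ i.val ∧ i.val < 2 * s} := by
        rw [Matrix.rank_diagonal]
        exact Fintype.card_congr (Equiv.subtypeEquivRight fun i => by simp)
    _ = _ := card_fin_Ico hs

theorem pairingMatrix_update {K : Type} [Field K] {m s : ℕ} (d : ℕ → K) {r : ℕ} {a b : Fin m}
    (hr : r % 2 = 0) (hrs : r + 1 < 2 * s) (ha : a.val = r) (hb : b.val = r + 1) (x : K) :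
    pairingMatrix m s (Function.update d r x) =
      pairingMatrix m s d + wedgeMatrix (Pi.single a 1) (Pi.single b (x - d r)) := by
  ext i j
  simp only [pairingMatrix, Matrix.of_apply, Matrix.add_apply, wedgeMatrix_apply,
    Pi.single_apply, Fin.ext_iff, Function.update_apply]
  grind

/-- A matrix with the row and the column of index `a` replaced by zero. -/
def eraseIndex {K : Type} [Field K] {m : ℕ} (a : Fin m) (A : Matrix (Fin m) (Fin m) K) :
    Matrix (Fin m) (Fin m) K :=
  Matrix.of fun i j => if i = a ∨ j = a then 0 else A i j

theorem eraseIndex_apply {K : Type} [Field K] {m : ℕ} {a i j : Fin m} (hi : i ≠ a) (hj : j ≠ a)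
    (A : Matrix (Fin m) (Fin m) K) : eraseIndex a A i j = A i j := by
  simp [eraseIndex, hi, hj]

theorem eraseIndex_add_wedgeMatrix {K : Type} [Field K] {m : ℕ} (a : Fin m)
    (A : Matrix (Fin m) (Fin m) K) (u : Fin m → K) :
    eraseIndex a (A + wedgeMatrix (Pi.single a 1) u) = eraseIndex a A := by
  ext i j
  simp only [eraseIndex, Matrix.of_apply, Matrix.add_apply, wedgeMatrix_apply, Pi.single_apply]
  grind

theorem SplitsAt.trace_mul {K : Type} [Field K] {m : ℕ} {G : Matrix (Fin m) (Fin m) K}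
    {a b : Fin m} (hG : SplitsAt G a b) {A : Matrix (Fin m) (Fin m) K} (hA : IsSkewSym A) :
    Matrix.trace (G * A) = -2 * A a b + Matrix.trace
      ((G - wedgeMatrix (Pi.single a 1) (Pi.single b 1)) * eraseIndex a A) := by
  have hab : a ≠ b := by
    rintro rfl
    simpa [hG.1.2 a] using hG.2.1
  have h0 : ∀ i j, i = a ∨ j = a →
      (G - wedgeMatrix (Pi.single a 1) (Pi.single b 1) : Matrix _ _ K) i j = 0 := by
    intro i j hij
    have h1 := hG.1.apply_swap i j
    have h2 := hG.1.2 a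
    have h3 := hG.2.1
    have h4 := hG.2.2 i
    have h5 := hG.2.2 j
    simp only [Matrix.sub_apply, wedgeMatrix_apply, Pi.single_apply]
    grind
  rw [← trace_wedgeMatrix_single_mul a b hA]
  have h1 : Matrix.trace ((G - wedgeMatrix (Pi.single a 1) (Pi.single b 1)) * eraseIndex a A) =
      Matrix.trace ((G - wedgeMatrix (Pi.single a 1) (Pi.single b 1)) * A) := by
    simp only [Matrix.trace, Matrix.diag, Matrix.mul_apply]
    refine Finset.sum_congr rfl fun i _ => Finset.sum_congr rfl fun j _ => ?_
    by_cases hij : i = a ∨ j = a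
    · rw [h0 i j hij, zero_mul, zero_mul]
    · push Not at hij
      rw [eraseIndex_apply hij.2 hij.1]
  rw [h1, ← Matrix.trace_add, ← Matrix.add_mul, add_sub_cancel]

/-- A form splitting off a hyperbolic plane and having rank at least `4` has larger weight than
the hyperbolic plane alone. -/
theorem SplitsAt.affWt_lt {K : Type} [Field K] [Fintype K] {m t : ℕ} (hchar : ringChar K ≠ 2)
    (ht : 1 ≤ t) (htm : 2 * t + 2 ≤ m) {G : Matrix (Fin m) (Fin m) K} {a b c d : Fin m}
    (ha : a.val = 0) (hb : b.val = 1) (hc : c.val = 2) (hd : d.val = 3)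
    (hG : SplitsAt G a b) (hcd : G c d ≠ 0) :
    affWt K m t (wedgeMatrix (Pi.single a 1) (Pi.single b 1)) < affWt K m t G := by
  have h2 : (2 : K) ≠ 0 := Ring.two_ne_zero hchar
  have hab : a ≠ b := by rw [Ne, Fin.ext_iff]; omega
  set H := G - wedgeMatrix (Pi.single a 1) (Pi.single b 1) with hH
  choose u hub hu0 hrank using fun R : Matrix (Fin m) (Fin m) K =>
    exists_rank_add_wedgeMatrix_le hab R (Matrix.trace (H * R) / 2)
  have htr : ∀ A, IsSkewSym A → Matrix.trace
      (G * (A + wedgeMatrix (Pi.single a 1) (u (eraseIndex a A)))) = -2 * A a b := by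
    intro A hA
    rw [hG.trace_mul (hA.add (isSkewSym_wedgeMatrix _ _)), eraseIndex_add_wedgeMatrix, ← hH,
      Matrix.add_apply, wedgeMatrix_apply, hub, Pi.single_eq_same,
      Pi.single_eq_of_ne hab.symm]
    field_simp
    ring
  let φ : {A : Matrix (Fin m) (Fin m) K // IsSkewSym A ∧ A.rank ≤ 2 * t ∧
        Matrix.trace (wedgeMatrix (Pi.single a 1) (Pi.single b 1) * A) ≠ 0} →
      {A : Matrix (Fin m) (Fin m) K // IsSkewSym A ∧ A.rank ≤ 2 * t ∧
        Matrix.trace (G * A) ≠ 0} := fun A =>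
    ⟨A.1 + wedgeMatrix (Pi.single a 1) (u (eraseIndex a A.1)),
      A.2.1.add (isSkewSym_wedgeMatrix _ _),
      (hrank _ A.1 A.2.1 (fun i j hi hj => (eraseIndex_apply hi hj _).symm) (by
        have := A.2.2.2
        rw [trace_wedgeMatrix_single_mul a b A.2.1] at this
        exact right_ne_zero_of_mul this)).trans A.2.2.1,
      by
        rw [htr A.1 A.2.1, ← trace_wedgeMatrix_single_mul a b A.2.1]
        exact A.2.2.2⟩
  have hφ : ∀ A, (φ A).1 = A.1 + wedgeMatrix (Pi.single a 1) (u (eraseIndex a A.1)) :=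
    fun _ => rfl
  have herase : ∀ A, eraseIndex a (φ A).1 = eraseIndex a A.1 := fun A => by
    rw [hφ, eraseIndex_add_wedgeMatrix]
  have hinj : Function.Injective φ := by
    intro A B hAB
    have h := hφ A
    rw [hAB, hφ B, ← herase A, ← herase B, hAB] at h
    exact Subtype.ext (add_right_cancel h).symm
  obtain ⟨x, hx0, hx⟩ : ∃ x : K, x ≠ 0 ∧ Matrix.trace (G * pairingMatrix m (t + 1)
      (Function.update (Function.update (fun _ => 1) 0 0) 2 x)) ≠ 0 := by
    by_contra! h
    have h1 := h 1 one_ne_zero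
    have h3 := h (-1) (neg_ne_zero.mpr one_ne_zero)
    rw [pairingMatrix_update _ (by norm_num) (by omega) hc (by omega : d.val = 2 + 1),
      Matrix.mul_add, Matrix.trace_add, Matrix.trace_mul_comm G (wedgeMatrix _ _)] at h1 h3
    have hw : ∀ y : K, wedgeMatrix (Pi.single c 1 : Fin m → K) (Pi.single d y) =
        y • wedgeMatrix (Pi.single c 1) (Pi.single d 1) := by
      intro y
      ext i j
      simp only [wedgeMatrix_apply, Matrix.smul_apply, Pi.single_apply, smul_eq_mul]
      grind
    rw [hw, Matrix.smul_mul, Matrix.trace_smul, trace_wedgeMatrix_single_mul c d hG.1,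
      smul_eq_mul] at h1 h3
    have h4 : (2 * 2 : K) * G c d = 0 := by linear_combination h3 - h1
    simp [h2, hcd] at h4
  set B := pairingMatrix (K := K) m (t + 1)
    (Function.update (Function.update (fun _ => 1) 0 0) 2 x) with hB
  have hBskew : IsSkewSym B := isSkewSym_pairingMatrix _ _ _
  have hBrank : B.rank ≤ 2 * t := rank_pairingMatrix_le (by omega) (by simp)
  have hBab : B a b = 0 := by simp [hB, pairingMatrix, ha, hb]
  have hBcol : ∀ j, j ≠ a → eraseIndex a B j b = 0 := by
    intro j hj
    rw [Ne, Fin.ext_iff] at hj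
    simp only [eraseIndex, Matrix.of_apply, hB, pairingMatrix, hb]
    grind
  have hBu : Matrix.trace (H * eraseIndex a B) ≠ 0 := by
    have := hx
    rwa [hG.trace_mul hBskew, hBab, mul_zero, zero_add] at this
  have hnot : (⟨B, hBskew, hBrank, hx⟩ : {A : Matrix (Fin m) (Fin m) K // IsSkewSym A ∧
      A.rank ≤ 2 * t ∧ Matrix.trace (G * A) ≠ 0}) ∉ Set.range φ := by
    rintro ⟨A, hA⟩
    have h := hφ A
    rw [← herase A, hA, hu0 _ hBcol] at h
    have hA' : A.1 = pairingMatrix m (t + 1) (Function.update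
        (Function.update (Function.update (fun _ => 1) 0 0) 2 x) 0
        (-(Matrix.trace (H * eraseIndex a B) / 2))) := by
      rw [pairingMatrix_update _ (by norm_num) (by omega) ha (by omega : b.val = 0 + 1), ← hB]
      refine (eq_sub_of_add_eq h.symm).trans ?_
      ext i j
      simp [wedgeMatrix_apply, Pi.single_apply]
      grind
    have h5 := A.2.2.1
    rw [hA'] at h5
    have h6 := h5.trans' (rank_pairingMatrix_ge (by omega) (by
      intro i
      simp only [Function.update_apply]
      split_ifs <;> simp [hx0, h2, hBu]))
    omega
  classical
  simp only [affWt, Nat.card_eq_fintype_card]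
  exact Fintype.card_lt_of_injective_of_notMem φ hinj hnot

theorem SplitsAt.eq_of_wedgeMatrix {K : Type} [Field K] {m : ℕ} {a b : Fin m} {u v : Fin m → K}
    (h : SplitsAt (wedgeMatrix u v) a b) :
    wedgeMatrix u v = wedgeMatrix (Pi.single a 1) (Pi.single b 1) := by
  obtain ⟨hs, h1, h0⟩ := h
  ext i j
  have hij : wedgeMatrix u v a b * wedgeMatrix u v i j -
      wedgeMatrix u v a i * wedgeMatrix u v b j +
      wedgeMatrix u v a j * wedgeMatrix u v b i = 0 := by
    simp only [wedgeMatrix_apply]; ring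
  have hswap := hs.apply_swap i j
  have hswap' := hs.apply_swap a b
  have haa := hs.2 a
  have hbb := hs.2 b
  have hi := h0 i
  have hj := h0 j
  rw [wedgeMatrix_apply (Pi.single a 1)]
  generalize wedgeMatrix u v = G at *
  simp only [Pi.single_apply]
  grind

theorem SplitsAt.eq_wedgeMatrix_or_exists {K : Type} [Field K] {m : ℕ} {a b : Fin m}
    {G : Matrix (Fin m) (Fin m) K} (h : SplitsAt G a b) :
    G = wedgeMatrix (Pi.single a 1) (Pi.single b 1) ∨
      ∃ i j, i ≠ a ∧ i ≠ b ∧ j ≠ a ∧ j ≠ b ∧ i ≠ j ∧ G i j ≠ 0 := by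
  obtain ⟨hs, h1, h0⟩ := h
  by_contra! hne
  obtain ⟨hne, hz⟩ := hne
  refine hne ?_
  ext i j
  have hswap := hs.apply_swap i j
  have hii := hs.2 i
  have hi := h0 i
  have hj := h0 j
  have hij := hz i j
  rw [wedgeMatrix_apply]
  simp only [Pi.single_apply]
  have haa := hs.2 a
  have hbb := hs.2 b
  grind

/-- The codewords of the weight of a rank two form are exactly those of the rank two forms. -/
theorem affWt_eq_iff {K : Type} [Field K] [Fintype K] {m t : ℕ} (hchar : ringChar K ≠ 2)
    (ht : 1 ≤ t) (htm : 2 * t + 2 ≤ m) {a b : Fin m} (ha : a.val = 0) (hb : b.val = 1)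
    {F : Matrix (Fin m) (Fin m) K} (hF : IsSkewSym F) (hF0 : F ≠ 0) :
    affWt K m t F = affWt K m t (wedgeMatrix (Pi.single a 1) (Pi.single b 1)) ↔
      ∃ u v, F = wedgeMatrix u v := by
  have hab : a ≠ b := by rw [Ne, Fin.ext_iff]; omega
  obtain ⟨P, hP, hG⟩ := exists_congr_splitsAt hchar hF hF0 hab
  have hw := affWt_congr hchar t F P hP
  constructor
  · intro h
    rcases hG.eq_wedgeMatrix_or_exists with hE | ⟨i, j, hia, hib, hja, hjb, hij, hGij⟩
    · have hQ := Matrix.nonsing_inv_mul P hP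
      have hT : Pᵀ * P⁻¹ᵀ = 1 := by rw [← Matrix.transpose_mul, hQ, Matrix.transpose_one]
      refine ⟨P⁻¹ *ᵥ Pi.single a 1, P⁻¹ *ᵥ Pi.single b 1, ?_⟩
      rw [← mul_wedgeMatrix_mul_transpose, ← hE]
      calc F = (P⁻¹ * P) * F * (Pᵀ * P⁻¹ᵀ) := by rw [hT, hQ, Matrix.one_mul, Matrix.mul_one]
        _ = _ := by simp only [Matrix.mul_assoc]
    · obtain ⟨c, hc⟩ : ∃ c : Fin m, c.val = 2 := ⟨⟨2, by omega⟩, rfl⟩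
      obtain ⟨d, hd⟩ : ∃ d : Fin m, d.val = 3 := ⟨⟨3, by omega⟩, rfl⟩
      have hac : a ≠ c := by rw [Ne, Fin.ext_iff]; omega
      have had : a ≠ d := by rw [Ne, Fin.ext_iff]; omega
      have hbc : b ≠ c := by rw [Ne, Fin.ext_iff]; omega
      have hbd : b ≠ d := by rw [Ne, Fin.ext_iff]; omega
      have hcd : c ≠ d := by rw [Ne, Fin.ext_iff]; omega
      obtain ⟨σ, hσc, hσd, hσ⟩ := exists_perm_two hcd hij
      have hσa : σ a = a := hσ a hac had hia.symm hja.symm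
      have hσb : σ b = b := hσ b hbc hbd hib.symm hjb.symm
      obtain ⟨Q, hQ, hsub⟩ := exists_congr_submatrix (P * F * Pᵀ) σ
      have hS : SplitsAt ((P * F * Pᵀ).submatrix σ σ) a b := by
        refine ⟨hsub ▸ hG.1.congr hchar Q, by simpa [hσa, hσb] using hG.2.1,
          fun k hka hkb => ?_⟩
        have h1 : σ k ≠ a := fun h => hka (σ.injective (h.trans hσa.symm))
        have h2 : σ k ≠ b := fun h => hkb (σ.injective (h.trans hσb.symm))
        simpa [hσa, hσb] using hG.2.2 (σ k) h1 h2
      have hlt := hS.affWt_lt hchar ht htm ha hb hc hd (by simpa [hσc, hσd] using hGij)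
      rw [hsub, affWt_congr hchar t _ Q hQ, hw, h] at hlt
      exact absurd hlt (lt_irrefl _)
  · rintro ⟨u, v, rfl⟩
    rw [mul_wedgeMatrix_mul_transpose] at hG hw
    rw [← hw, hG.eq_of_wedgeMatrix]

theorem Estd_one {K : Type} [Field K] {m : ℕ} {a b : Fin m} (ha : a.val = 0) (hb : b.val = 1) :
    Estd K 1 m = wedgeMatrix (Pi.single a 1) (Pi.single b 1) := by
  ext i j
  simp only [Estd, Matrix.of_apply, wedgeMatrix_apply, Pi.single_apply, Fin.ext_iff]
  grind

theorem splitsAt_Estd {K : Type} [Field K] {m k : ℕ} (hk : 1 ≤ k) {a b : Fin m} (ha : a.val = 0)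
    (hb : b.val = 1) : SplitsAt (Estd K k m) a b := by
  refine ⟨isSkewSym_of_apply (fun i j => ?_) (fun i => ?_), ?_, fun j hja hjb => ⟨?_, ?_⟩⟩ <;>
    simp only [Estd, Matrix.of_apply] <;> grind

/-- The linear map `v ↦ u ∧ v`. -/
def wedgeMap {K : Type} [Field K] {m : ℕ} (u : Fin m → K) :
    (Fin m → K) →ₗ[K] Matrix (Fin m) (Fin m) K where
  toFun := wedgeMatrix u
  map_add' v w := by ext i j; simp only [wedgeMatrix_apply, Matrix.add_apply, Pi.add_apply]; ring
  map_smul' c v := by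
    ext i j
    simp only [wedgeMatrix_apply, Matrix.smul_apply, Pi.smul_apply, smul_eq_mul,
      RingHom.id_apply]
    ring

theorem ker_wedgeMap {K : Type} [Field K] {m : ℕ} {u : Fin m → K} (hu : u ≠ 0) :
    LinearMap.ker (wedgeMap u) = Submodule.span K {u} := by
  ext v
  rw [LinearMap.mem_ker, Submodule.mem_span_singleton]
  constructor
  · intro h
    obtain ⟨i, hi⟩ := Function.ne_iff.mp hu
    refine ⟨v i / u i, ?_⟩
    ext j
    have hij : u i * v j - v i * u j = 0 := congrFun (congrFun h i) j
    simp only [Pi.zero_apply] at hi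
    simp only [Pi.smul_apply, smul_eq_mul]
    field_simp
    linear_combination -hij
  · rintro ⟨c, rfl⟩
    ext i j
    change u i * (c * u j) - c * u i * u j = 0
    ring

theorem card_range_wedgeMap {K : Type} [Field K] [Fintype K] {m : ℕ} {u : Fin m → K}
    (hu : u ≠ 0) : Nat.card (LinearMap.range (wedgeMap u)) = Fintype.card K ^ (m - 1) := by
  have h := LinearMap.finrank_range_add_finrank_ker (wedgeMap u)
  rw [ker_wedgeMap hu, finrank_span_singleton hu, Module.finrank_fin_fun] at h
  rw [Module.natCard_eq_pow_finrank (K := K), Nat.card_eq_fintype_card]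
  congr 1
  omega

/-- The nonzero vectors dividing a nonzero decomposable form are the nonzero vectors of the plane
it spans. -/
theorem exists_eq_wedgeMatrix_iff {K : Type} [Field K] {m : ℕ} {u₀ v₀ : Fin m → K}
    (h0 : wedgeMatrix u₀ v₀ ≠ 0) (u : Fin m → K) :
    (u ≠ 0 ∧ ∃ v, wedgeMatrix u₀ v₀ = wedgeMatrix u v) ↔
      ∃ p : K × K, p ≠ 0 ∧ p.1 • u₀ + p.2 • v₀ = u := by
  constructor
  · rintro ⟨hu, v, h⟩
    obtain ⟨j, k, hjk⟩ : ∃ j k, wedgeMatrix u₀ v₀ j k ≠ 0 := by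
      by_contra! h'
      exact h0 (by ext j k; exact h' j k)
    set f := wedgeMatrix u₀ v₀ j k with hf
    have hfu : f = u j * v k - v j * u k := by rw [hf, h, wedgeMatrix_apply]
    have hi : (((u j * v₀ k - u k * v₀ j) / f, (u k * u₀ j - u j * u₀ k) / f) : K × K).1 • u₀ +
        (((u j * v₀ k - u k * v₀ j) / f, (u k * u₀ j - u j * u₀ k) / f) : K × K).2 • v₀ = u := by
      ext i
      have h1 := congrFun (congrFun h k) i
      have h2 := congrFun (congrFun h j) i
      simp only [wedgeMatrix_apply] at h1 h2
      simp only [Pi.add_apply, Pi.smul_apply, smul_eq_mul]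
      field_simp
      rw [hfu]
      linear_combination u k * h2 - u j * h1
    refine ⟨_, fun hp => hu ?_, hi⟩
    rw [← hi, hp]
    simp
  · rintro ⟨⟨x, y⟩, hxy, rfl⟩
    by_cases hx : x = 0
    · subst hx
      have hy : y ≠ 0 := fun hy => hxy (by rw [hy]; rfl)
      refine ⟨fun h => h0 ?_, -(y⁻¹ • u₀), ?_⟩
      · have hv : v₀ = 0 := by simpa [hy] using h
        ext i j
        simp [wedgeMatrix_apply, hv]
      · ext i j
        simp [wedgeMatrix_apply]
        field_simp
        ring
    · refine ⟨fun h => h0 ?_, x⁻¹ • v₀, ?_⟩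
      · have hu : u₀ = -((y / x) • v₀) := by
          ext i
          have := congrFun h i
          simp only [Pi.add_apply, Pi.smul_apply, smul_eq_mul, Pi.zero_apply] at this
          simp only [Pi.neg_apply, Pi.smul_apply, smul_eq_mul]
          field_simp
          linear_combination this
        ext i j
        rw [hu]
        simp [wedgeMatrix_apply]
        ring
      · ext i j
        simp [wedgeMatrix_apply]
        field_simp
        ring

theorem plane_injective {K : Type} [Field K] {m : ℕ} {u₀ v₀ : Fin m → K}
    (h0 : wedgeMatrix u₀ v₀ ≠ 0) :
    Function.Injective (fun p : K × K => p.1 • u₀ + p.2 • v₀) := by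
  obtain ⟨j, k, hjk⟩ : ∃ j k, wedgeMatrix u₀ v₀ j k ≠ 0 := by
    by_contra! h'
    exact h0 (by ext j k; exact h' j k)
  rintro ⟨x, y⟩ ⟨x', y'⟩ h
  have hj := congrFun h j
  have hk := congrFun h k
  simp only [Pi.add_apply, Pi.smul_apply, smul_eq_mul] at hj hk
  rw [wedgeMatrix_apply] at hjk
  refine Prod.ext (mul_right_cancel₀ hjk ?_) (mul_right_cancel₀ hjk ?_)
  · linear_combination v₀ k * hj - v₀ j * hk
  · linear_combination u₀ j * hk - u₀ k * hj

open scoped Classical in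
/-- The number of nonzero decomposable forms. -/
theorem card_wedgeMatrix_mul {K : Type} [Field K] [Fintype K] (m : ℕ) :
    Nat.card {F : Matrix (Fin m) (Fin m) K // F ≠ 0 ∧ ∃ u v, F = wedgeMatrix u v} *
        (Fintype.card K ^ 2 - 1) =
      (Fintype.card K ^ m - 1) * (Fintype.card K ^ (m - 1) - 1) := by
  have hne : ∀ {V : Type} [Fintype V] [DecidableEq V] [Zero V],
      (Finset.univ.filter fun v : V => v ≠ 0).card = Fintype.card V - 1 := by
    intro V _ _ _
    rw [Finset.filter_ne', Finset.card_erase_of_mem (Finset.mem_univ _), Finset.card_univ]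
  have h := Finset.card_mul_eq_card_mul
    (s := Finset.univ.filter fun F : Matrix (Fin m) (Fin m) K =>
      F ≠ 0 ∧ ∃ u v, F = wedgeMatrix u v)
    (t := Finset.univ.filter fun u : Fin m → K => u ≠ 0)
    (m := Fintype.card K ^ 2 - 1) (n := Fintype.card K ^ (m - 1) - 1)
    (fun F u => ∃ v, F = wedgeMatrix u v) ?_ ?_
  · rw [Nat.card_eq_fintype_card, Fintype.card_subtype, h, hne, Fintype.card_fun,
      Fintype.card_fin]
  · intro F hF
    obtain ⟨hF0, u₀, v₀, rfl⟩ := (Finset.mem_filter.mp hF).2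
    have himg : Finset.bipartiteAbove (fun F u => ∃ v, F = wedgeMatrix u v)
        (Finset.univ.filter fun u : Fin m → K => u ≠ 0) (wedgeMatrix u₀ v₀) =
        (Finset.univ.filter fun p : K × K => p ≠ 0).image
          (fun p : K × K => p.1 • u₀ + p.2 • v₀) := by
      ext u
      simpa [Finset.mem_bipartiteAbove] using exists_eq_wedgeMatrix_iff hF0 u
    rw [himg, Finset.card_image_of_injective _ (plane_injective hF0), hne, Fintype.card_prod,
      sq]
  · intro u hu
    have hu0 : u ≠ 0 := (Finset.mem_filter.mp hu).2
    have himg : Finset.bipartiteBelow (fun F u => ∃ v, F = wedgeMatrix u v)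
        (Finset.univ.filter fun F : Matrix (Fin m) (Fin m) K =>
          F ≠ 0 ∧ ∃ u v, F = wedgeMatrix u v) u =
        (Finset.univ.filter fun F => F ∈ LinearMap.range (wedgeMap u)).erase 0 := by
      ext F
      simp only [Finset.mem_bipartiteBelow, Finset.mem_filter, Finset.mem_univ, true_and,
        Finset.mem_erase, LinearMap.mem_range]
      constructor
      · rintro ⟨⟨hF0, -⟩, v, rfl⟩
        exact ⟨hF0, v, rfl⟩
      · rintro ⟨hF0, v, rfl⟩
        exact ⟨⟨hF0, u, v, rfl⟩, v, rfl⟩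
    rw [himg, Finset.card_erase_of_mem (by simpa using ⟨0, map_zero _⟩), ← card_range_wedgeMap hu0,
      Nat.card_eq_fintype_card, Fintype.card_subtype]

theorem stmt18 (K : Type) [Field K] [Fintype K] (hchar : ringChar K ≠ 2)
    (m k t : ℕ) (hk : 2 ≤ k) (hkm : 2*k ≤ m) (ht : 2 ≤ t) (htm : 2*t ≤ m - 2) :
    Wcap K 1 t m < Wcap K k t m ∧
    Nat.card {F : Matrix (Fin m) (Fin m) K //
        IsSkewSym F ∧ F ≠ 0 ∧ affWt K m t F = Wcap K 1 t m} * (Fintype.card K ^ 2 - 1)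
      = (Fintype.card K ^ m - 1) * (Fintype.card K ^ (m-1) - 1) := by
  obtain ⟨a, ha⟩ : ∃ a : Fin m, a.val = 0 := ⟨⟨0, by omega⟩, rfl⟩
  obtain ⟨b, hb⟩ : ∃ b : Fin m, b.val = 1 := ⟨⟨1, by omega⟩, rfl⟩
  obtain ⟨c, hc⟩ : ∃ c : Fin m, c.val = 2 := ⟨⟨2, by omega⟩, rfl⟩
  obtain ⟨d, hd⟩ : ∃ d : Fin m, d.val = 3 := ⟨⟨3, by omega⟩, rfl⟩
  have hW : ∀ j, Wcap K j t m = affWt K m t (Estd K j m) := fun _ => rfl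
  rw [hW, hW, Estd_one ha hb]
  refine ⟨(splitsAt_Estd (by omega) ha hb).affWt_lt hchar (by omega) (by omega) ha hb hc hd ?_,
    ?_⟩
  · have : 3 < 2 * k := by omega
    simp [Estd, hc, hd, this]
  · rw [← card_wedgeMatrix_mul]
    congr 1
    refine Nat.card_congr (Equiv.subtypeEquivRight fun F => ⟨?_, ?_⟩)
    · rintro ⟨hF, hF0, hw⟩
      exact ⟨hF0, (affWt_eq_iff hchar (by omega) (by omega) ha hb hF hF0).mp hw⟩
    · rintro ⟨hF0, hw⟩
      have hF : IsSkewSym F := by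
        obtain ⟨u, v, rfl⟩ := hw
        exact isSkewSym_wedgeMatrix u v
      exact ⟨hF, hF0, (affWt_eq_iff hchar (by omega) (by omega) ha hb hF hF0).mpr hw⟩
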